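/- arXiv:2605.08388 — 2 statements merged into one kernel-verified Lean document; each statement's English description precedes it below -/
import Mathlib

section
/- (Lemma 2, ideal case.) Let K ≥ 1 and let φ : Fin K → Fin K → ℝ be a column-stochastic matrix (all entries nonnegative, each column summing to 1). Define a = min_{l ∈ Fin K} φ l l. Let y, h ∈ Fin K with h ≠ y and suppose φ y y < 1. Then φ y y / (1 − φ y y) ≥ (φ h y + 2a − 1) / (2 − (φ h y + 2a)), and moreover the denominator 2 − (φ h y + 2a) is strictly positive. -/
/-- Lemma 2 (ideal case): for a column-stochastic confusion matrix `φ` with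
minimum diagonal entry `a`, estimated label `h ≠ y`, and `φ y y < 1`,
the odds ratio satisfies
`φ y y / (1 - φ y y) ≥ (φ h y + 2a - 1) / (2 - (φ h y + 2a))`,
and the denominator `2 - (φ h y + 2a)` is strictly positive. -/
theorem ideal_human_odds_lower_bound
    (K : ℕ) (hK : 1 ≤ K) (φ : Fin K → Fin K → ℝ)
    (hnn : ∀ s t : Fin K, 0 ≤ φ s t)
    (hcol : ∀ t : Fin K, ∑ s : Fin K, φ s t = 1)
    (y h : Fin K) (hhy : h ≠ y) (hlt : φ y y < 1) :
    (φ h y + 2 * (Finset.univ.inf' (Finset.univ_nonempty_iff.mpr ⟨⟨0, hK⟩⟩)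
          (fun l : Fin K => φ l l)) - 1) /
      (2 - (φ h y + 2 * (Finset.univ.inf' (Finset.univ_nonempty_iff.mpr ⟨⟨0, hK⟩⟩)
          (fun l : Fin K => φ l l)))) ≤ φ y y / (1 - φ y y) ∧
    0 < 2 - (φ h y + 2 * (Finset.univ.inf' (Finset.univ_nonempty_iff.mpr ⟨⟨0, hK⟩⟩)
          (fun l : Fin K => φ l l))) := by
  have ha : Finset.univ.inf' (Finset.univ_nonempty_iff.mpr ⟨⟨0, hK⟩⟩)
      (fun l : Fin K => φ l l) ≤ φ y y :=
    Finset.inf'_le (fun l : Fin K => φ l l) (Finset.mem_univ y)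
  generalize Finset.univ.inf' (Finset.univ_nonempty_iff.mpr ⟨⟨0, hK⟩⟩)
      (fun l : Fin K => φ l l) = a at ha ⊢
  have hs : φ h y + φ y y ≤ 1 := by
    rw [← hcol y, ← Finset.sum_pair (f := fun s => φ s y) hhy]
    exact Finset.sum_le_sum_of_subset_of_nonneg (Finset.subset_univ _)
      (fun i _ _ => hnn i y)
  have hd : 0 < 2 - (φ h y + 2 * a) := by linarith
  refine ⟨?_, hd⟩
  rw [div_le_div_iff₀ hd (by linarith)]
  nlinarith
end

section
/- (Product corollary of Lemma 2, ideal case.) Let K ≥ 1, let n ≥ 1, and for each i ∈ Fin n let φ⁽ⁱ⁾ : Fin K → Fin K → ℝ be a column-stochastic matrix (entries nonnegative, columns summing to 1) with aᵢ = min_{l} φ⁽ⁱ⁾ l l. Fix y ∈ Fin K and for each i let hᵢ ∈ Fin K with hᵢ ≠ y. Suppose for every i that φ⁽ⁱ⁾ y y < 1 and φ⁽ⁱ⁾ hᵢ y + 2aᵢ ≥ 1. Then ∏_{i} φ⁽ⁱ⁾ y y / (1 − φ⁽ⁱ⁾ y y) ≥ ∏_{i} (φ⁽ⁱ⁾ hᵢ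 y + 2aᵢ − 1) / (2 − (φ⁽ⁱ⁾ hᵢ y + 2aᵢ)). -/
/-- Product corollary of Lemma 2 (ideal case): for `n` ideal humans with
column-stochastic confusion matrices `φ i`, minimum diagonal entries `aᵢ`,
estimated labels `h i ≠ y`, with `φ i y y < 1` and `φ i (h i) y + 2aᵢ ≥ 1`
for every `i`, the product of odds ratios is bounded below by the product of
the PLACO value-function expressions. -/
theorem ideal_humans_product_odds_lower_bound
    (K n : ℕ) (hK : 1 ≤ K) (hn : 1 ≤ n)
    (φ : Fin n → Fin K → Fin K → ℝ)
    (hnn : ∀ i, ∀ s t : Fin K, 0 ≤ φ i s t)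
    (hcol : ∀ i, ∀ t : Fin K, ∑ s : Fin K, φ i s t = 1)
    (y : Fin K) (h : Fin n → Fin K) (hhy : ∀ i, h i ≠ y)
    (hlt : ∀ i, φ i y y < 1)
    (hge : ∀ i, 1 ≤ φ i (h i) y +
        2 * (Finset.univ.inf' (Finset.univ_nonempty_iff.mpr ⟨⟨0, hK⟩⟩)
              (fun l : Fin K => φ i l l))) :
    ∏ i : Fin n,
        (φ i (h i) y +
            2 * (Finset.univ.inf' (Finset.univ_nonempty_iff.mpr ⟨⟨0, hK⟩⟩)
                  (fun l : Fin K => φ i l l)) - 1) /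
          (2 - (φ i (h i) y +
            2 * (Finset.univ.inf' (Finset.univ_nonempty_iff.mpr ⟨⟨0, hK⟩⟩)
                  (fun l : Fin K => φ i l l)))) ≤
      ∏ i : Fin n, φ i y y / (1 - φ i y y) := by
  have key : ∀ i, φ i (h i) y + φ i y y ≤ 1 := by
    intro i
    rw [← hcol i y, ← Finset.sum_pair (f := fun s => φ i s y) (hhy i)]
    exact Finset.sum_le_sum_of_subset_of_nonneg (Finset.subset_univ _)
      (fun s _ _ => hnn i s y)
  have ha : ∀ i, Finset.univ.inf' (Finset.univ_nonempty_iff.mpr ⟨⟨0, hK⟩⟩)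
      (fun l : Fin K => φ i l l) ≤ φ i y y := fun i =>
    Finset.inf'_le (fun l : Fin K => φ i l l) (Finset.mem_univ y)
  refine Finset.prod_le_prod (fun i _ => ?_) (fun i _ => ?_)
  · have h1 := key i
    have h2 := ha i
    have h3 := hge i
    have h4 := hlt i
    exact div_nonneg (by linarith) (by linarith)
  · have h1 := key i
    have h2 := ha i
    have h4 := hlt i
    exact div_le_div₀ (hnn i y y) (by linarith) (by linarith) (by linarith)
end
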